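/- arXiv:1803.11202 — 3 statements merged into one kernel-verified Lean document; each statement's English description precedes it below -/
import Mathlib

section
/- Let T > 0 and let λ : ℝ → ℝ be nonnegative, integrable on [0,T), and piecewise continuous on [0,T) (continuous except at finitely many points). Then λ is constant almost everywhere on [0,T) — equivalently λ(t) = (1/T)∫_0^T λ(s) ds for almost every t ∈ [0,T) — if and only if for every integer J ≥ 0 the dyadic integrals at level J are all equal, i.e. ∫_{s_k^J} λ = ∫_{s_{k'}^J} λ for all 0 ≤ k, k' ≤ 2^J − 1. -/
open MeasureTheory Set

/-- The dyadic subinterval `s_k^j = [T k / 2^j, T (k+1) / 2^j)` of `[0, T)`. -/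
noncomputable def dyadicIco (T : ℝ) (j k : ℕ) : Set ℝ :=
  Set.Ico (T * k / 2 ^ j) (T * (k + 1) / 2 ^ j)

/-! If all `2 ^ J` dyadic integrals at level `J` are equal, each of them is `2 ^ (-J)` times the
integral over `[0, T)`, so the average over every dyadic interval is the overall mean. By the
Lebesgue differentiation theorem, almost every value is the limit of the averages over the dyadic
intervals containing that point, hence is the overall mean. -/

section

open Filter Topology

variable {E : Type*} [NormedAddCommGroup E] [NormedSpace ℝ E] {f : ℝ → E} {T : ℝ} {j k : ℕ}

theorem dyadicIco_subset_Ico (hT : 0 ≤ T) (hk : k < 2 ^ j) : dyadicIco T j k ⊆ Ico 0 T := by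
  have hk' : (k : ℝ) + 1 ≤ 2 ^ j := by exact_mod_cast hk
  refine Ico_subset_Ico (by positivity) ?_
  rw [div_le_iff₀ (by positivity)]
  exact mul_le_mul_of_nonneg_left hk' hT

theorem exists_mem_dyadicIco (hT : 0 < T) {t : ℝ} (ht : t ∈ Ico 0 T) (j : ℕ) :
    ∃ k < 2 ^ j, t ∈ dyadicIco T j k := by
  have hpow : (0 : ℝ) < 2 ^ j := by positivity
  have hx : 0 ≤ t * 2 ^ j / T := div_nonneg (mul_nonneg ht.1 hpow.le) hT.le
  refine ⟨⌊t * 2 ^ j / T⌋₊, ?_, ?_, ?_⟩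
  · rw [Nat.floor_lt hx, div_lt_iff₀ hT, mul_comm]
    push_cast
    gcongr
    exact ht.2
  · rw [div_le_iff₀ hpow, mul_comm, ← le_div_iff₀ hT]
    exact Nat.floor_le hx
  · rw [lt_div_iff₀ hpow, mul_comm T, ← div_lt_iff₀ hT]
    exact Nat.lt_floor_add_one _

theorem dyadicIco_left_le_right (hT : 0 ≤ T) (j k : ℕ) :
    T * k / 2 ^ j ≤ T * (k + 1) / 2 ^ j := by
  gcongr
  exact le_add_of_nonneg_right zero_le_one

theorem measureReal_dyadicIco (hT : 0 ≤ T) (j k : ℕ) :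
    volume.real (dyadicIco T j k) = T / 2 ^ j := by
  rw [dyadicIco, Real.volume_real_Ico_of_le (dyadicIco_left_le_right hT j k)]
  ring

theorem sum_setIntegral_dyadicIco (hT : 0 ≤ T) (hf : IntegrableOn f (Ico 0 T)) (j : ℕ) :
    ∑ k ∈ Finset.range (2 ^ j), ∫ t in dyadicIco T j k, f t = ∫ t in Ico 0 T, f t := by
  let a : ℕ → ℝ := fun k ↦ T * k / 2 ^ j
  have ha (k : ℕ) : a k ≤ a (k + 1) := by
    simpa only [a, Nat.cast_succ] using dyadicIco_left_le_right hT j k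
  have hIco (k : ℕ) : dyadicIco T j k = Ico (a k) (a (k + 1)) := by
    simp only [dyadicIco, a, Nat.cast_succ]
  have hinterval {k : ℕ} (hk : k < 2 ^ j) : IntervalIntegrable f volume (a k) (a (k + 1)) := by
    rw [intervalIntegrable_iff_integrableOn_Ico_of_le (ha k), ← hIco]
    exact hf.mono_set (dyadicIco_subset_Ico hT hk)
  have ha_first : a 0 = 0 := by simp [a]
  have ha_last : a (2 ^ j) = T := by simp [a]
  have hsum := intervalIntegral.sum_integral_adjacent_intervals fun _ ↦ hinterval
  simpa only [intervalIntegral.integral_of_le, ha, ha_first, ha_last, hT,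
    ← integral_Ico_eq_integral_Ioc, ← hIco] using hsum

/-- Level `j` homogeneity of an intensity `f` on `[0, T)`, expressed through its dyadic integrals
rather than through its Haar reconstruction. -/
def IsLevelHomogeneous (T : ℝ) (f : ℝ → E) (j : ℕ) : Prop :=
  ∀ k k' : ℕ, k < 2 ^ j → k' < 2 ^ j →
    ∫ t in dyadicIco T j k, f t = ∫ t in dyadicIco T j k', f t

theorem isLevelHomogeneous_of_ae_eq_const [CompleteSpace E] (hT : 0 ≤ T) {c : E}
    (h : ∀ᵐ t ∂volume.restrict (Ico 0 T), f t = c) (j : ℕ) : IsLevelHomogeneous T f j := by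
  have hintegral {k : ℕ} (hk : k < 2 ^ j) : ∫ t in dyadicIco T j k, f t = (T / 2 ^ j) • c := by
    have hc := ae_restrict_of_ae_restrict_of_subset (dyadicIco_subset_Ico hT hk) h
    rw [integral_congr_ae hc, setIntegral_const, measureReal_dyadicIco hT]
  intro k k' hk hk'
  rw [hintegral hk, hintegral hk']

theorem IsLevelHomogeneous.setAverage_dyadicIco_eq (h : IsLevelHomogeneous T f j) (hT : 0 ≤ T)
    (hf : IntegrableOn f (Ico 0 T)) (hk : k < 2 ^ j) :
    ⨍ t in dyadicIco T j k, f t = ⨍ t in Ico 0 T, f t := by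
  have hsum : ∫ t in Ico 0 T, f t = (2 ^ j : ℝ) • ∫ t in dyadicIco T j k, f t := by
    rw [← sum_setIntegral_dyadicIco hT hf j,
      Finset.sum_congr rfl fun i hi ↦ h i k (Finset.mem_range.1 hi) hk, Finset.sum_const,
      Finset.card_range, ← Nat.cast_smul_eq_nsmul ℝ, Nat.cast_pow, Nat.cast_ofNat]
  rw [setAverage_eq, setAverage_eq, measureReal_dyadicIco hT, Real.volume_real_Ico_of_le hT,
    hsum, smul_smul, sub_zero, inv_div, div_eq_inv_mul]

theorem ae_tendsto_setAverage_Ico [CompleteSpace E] (hf : LocallyIntegrable f) :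
    ∀ᵐ t, ∀ {ι : Type*} {l : Filter ι} (a b : ι → ℝ), Tendsto (fun i ↦ b i - a i) l (𝓝[>] 0) →
      (∀ᶠ i in l, t ∈ Ico (a i) (b i)) →
        Tendsto (fun i ↦ ⨍ s in Ico (a i) (b i), f s) l (𝓝 (f t)) := by
  filter_upwards [IsUnifLocDoublingMeasure.ae_tendsto_average volume hf 1]
    with t ht ι l a b hab hmem
  have hradius : Tendsto (fun i ↦ (b i - a i) / 2) l (𝓝[>] 0) := by
    obtain ⟨hzero, hpos⟩ := tendsto_nhdsWithin_iff.1 hab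
    exact tendsto_nhdsWithin_iff.2
      ⟨by simpa only [zero_div] using hzero.div_const 2,
        hpos.mono fun _ hi ↦ mem_Ioi.2 (half_pos hi)⟩
  have hball : ∀ᶠ i in l, t ∈ Metric.closedBall ((a i + b i) / 2) (1 * ((b i - a i) / 2)) := by
    filter_upwards [hmem] with i hi
    rw [one_mul, ← Real.Icc_eq_closedBall]
    exact Ico_subset_Icc_self hi
  simpa only [← Real.Icc_eq_closedBall, ← setAverage_congr Ico_ae_eq_Icc] using
    ht _ _ hradius hball

theorem ae_tendsto_setAverage_dyadicIco [CompleteSpace E] (hT : 0 < T)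
    (hf : IntegrableOn f (Ico 0 T)) :
    ∀ᵐ t ∂volume.restrict (Ico 0 T), ∀ k : ℕ → ℕ,
      (∀ j, k j < 2 ^ j) → (∀ j, t ∈ dyadicIco T j (k j)) →
        Tendsto (fun j ↦ ⨍ s in dyadicIco T j (k j), f s) atTop (𝓝 (f t)) := by
  have hlocal : LocallyIntegrable ((Ico 0 T).indicator f) :=
    (hf.integrable_indicator measurableSet_Ico).locallyIntegrable
  have hlength : Tendsto (fun j : ℕ ↦ T / 2 ^ j) atTop (𝓝[>] 0) :=
    tendsto_nhdsWithin_iff.2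
      ⟨(tendsto_pow_atTop_atTop_of_one_lt one_lt_two).const_div_atTop T,
        .of_forall fun j ↦ div_pos hT (by positivity)⟩
  rw [ae_restrict_iff' measurableSet_Ico]
  filter_upwards [ae_tendsto_setAverage_Ico hlocal] with t ht htT k hk hmem
  have havg (j : ℕ) : ⨍ s in dyadicIco T j (k j), (Ico 0 T).indicator f s =
      ⨍ s in dyadicIco T j (k j), f s :=
    setAverage_congr_fun measurableSet_Ico <| .of_forall fun s hs ↦
      indicator_of_mem (dyadicIco_subset_Ico hT.le (hk j) hs) f
  have hlim := ht (fun j ↦ T * k j / 2 ^ j) (fun j ↦ T * (k j + 1) / 2 ^ j)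
    (hlength.congr fun j ↦ by ring) (.of_forall hmem)
  rw [indicator_of_mem htT] at hlim
  exact hlim.congr havg

theorem constant_ae_iff_all_levels_homogeneous_general [CompleteSpace E] (hT : 0 < T)
    (hf : IntegrableOn f (Ico 0 T)) :
    (∀ᵐ t ∂volume.restrict (Ico 0 T), f t = ⨍ s in Ico 0 T, f s) ↔
      ∀ j, IsLevelHomogeneous T f j := by
  refine ⟨isLevelHomogeneous_of_ae_eq_const hT.le, fun h ↦ ?_⟩
  filter_upwards [ae_tendsto_setAverage_dyadicIco hT hf, ae_restrict_mem measurableSet_Ico]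
    with t hlim ht
  choose k hk hmem using exists_mem_dyadicIco hT ht
  have hmean (j : ℕ) : ⨍ s in dyadicIco T j (k j), f s = ⨍ s in Ico 0 T, f s :=
    (h j).setAverage_dyadicIco_eq hT.le hf (hk j)
  exact tendsto_nhds_unique ((hlim k hk hmem).congr hmean) tendsto_const_nhds

end

/-- A nonnegative, integrable, piecewise continuous intensity on `[0, T)` is constant
almost everywhere on `[0, T)` (equal a.e. to its mean value `(1/T)∫_0^T λ`) if and only
if, for every level `J ≥ 0`, all its dyadic integrals at level `J` are equal; i.e. the
point process is level `J` homogeneous for all `J ≥ 0`. -/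
theorem constant_ae_iff_all_levels_homogeneous
    (T : ℝ) (hT : 0 < T) (lam : ℝ → ℝ)
    (hnn : ∀ t ∈ Set.Ico (0 : ℝ) T, 0 ≤ lam t)
    (hint : IntegrableOn lam (Set.Ico 0 T))
    (hpc : ∃ S : Finset ℝ, ContinuousOn lam (Set.Ico 0 T \ (S : Set ℝ))) :
    (∀ᵐ t ∂(volume.restrict (Set.Ico (0 : ℝ) T)),
        lam t = (1 / T) * ∫ s in Set.Ico (0 : ℝ) T, lam s) ↔
      ∀ J : ℕ, ∀ k k' : ℕ, k ≤ 2 ^ J - 1 → k' ≤ 2 ^ J - 1 →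
        (∫ t in dyadicIco T J k, lam t) = ∫ t in dyadicIco T J k', lam t := by
  simpa [IsLevelHomogeneous, setAverage_eq, hT.le, Nat.le_sub_one_iff_lt (Nat.two_pow_pos _)] using
    constant_ae_iff_all_levels_homogeneous_general hT hint
end

section
/- Fix an integer P ≥ 2. For each real t > 0 let Y₁(t), …, Y_P(t) be independent random variables each distributed as Poisson(t), and define R(t) = 2 ∑_{i=1}^P Y_i(t) log( P·Y_i(t) / ∑_{j=1}^P Y_j(t) ), with the conventions 0·log 0 = 0 and R(t) = 0 on the event ∑_j Y_j(t) = 0. Then, as t → ∞, the law of R(t) converges weakly (in distribution) to the chi-squared distribution with P − 1 degrees of freedom. (This is the asymptotic null distribution of the likelihood ratio statistic for equal means of P Poisson distributions; t plays the role of the product μ_c M, so the result holds even for a single realization M = 1 as μ_c → ∞.) -/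
open MeasureTheory ProbabilityTheory Filter

/-! Expanding `y log y` through `klFun x = x log x + 1 - x`, whose quotient by `(x - 1) ^ 2` extends
continuously to `x = 1` with value `1 / 2`, the likelihood ratio statistic becomes a jointly
continuous function of `1 / √t` and of the standardized observations `(Yᵢ - t) / √t`. As `t → ∞`,
the former tends to `0` and the latter converge in law to independent standard Gaussians `Zᵢ`, so
by continuous mapping the statistic converges in law to `∑ Zᵢ² - P Z̄²`. This is the squared norm of
the projection of `Z` onto the orthogonal complement of `(1, …, 1)`, itself a standard Gaussian
vector in dimension `P - 1`. -/

open InformationTheory Module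
open Complex (I)
open scoped Topology NNReal RealInnerProductSpace

/-- The function `klFun x / (x - 1) ^ 2`, extended to `x = 1` by its limit `1 / 2`:
the coefficient of the quadratic expansion of `klFun` at `1`, made exact. -/
noncomputable def klRatio : ℝ → ℝ :=
  Function.update (fun x ↦ klFun x / (x - 1) ^ 2) 1 (1 / 2)

@[simp]
lemma klRatio_one : klRatio 1 = 1 / 2 :=
  Function.update_self ..

lemma sq_mul_klRatio (x : ℝ) : (x - 1) ^ 2 * klRatio x = klFun x := by
  rcases eq_or_ne x 1 with rfl | hx
  · simp [klFun_one]
  · rw [klRatio, Function.update_of_ne hx, mul_div_cancel₀ _ (pow_ne_zero 2 (sub_ne_zero.2 hx))]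

lemma tendsto_log_div_sub_one : Tendsto (fun x ↦ Real.log x / (x - 1)) (𝓝[≠] 1) (𝓝 1) := by
  simpa [slope_fun_def_field] using (Real.hasDerivAt_log one_ne_zero).tendsto_slope

lemma tendsto_klFun_div_sq :
    Tendsto (fun x ↦ klFun x / (x - 1) ^ 2) (𝓝[≠] 1) (𝓝 (1 / 2)) := by
  have hnum : Tendsto klFun (𝓝[≠] 1) (𝓝 0) :=
    tendsto_nhdsWithin_of_tendsto_nhds (continuous_klFun.tendsto' 1 0 klFun_one)
  have hden : Tendsto (fun x : ℝ ↦ (x - 1) ^ 2) (𝓝[≠] 1) (𝓝 0) :=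
    tendsto_nhdsWithin_of_tendsto_nhds
      ((by fun_prop : Continuous fun x : ℝ ↦ (x - 1) ^ 2).tendsto' 1 0 (by simp))
  have hderiv : Tendsto (fun x ↦ Real.log x / (2 * (x - 1))) (𝓝[≠] 1) (𝓝 (1 / 2)) :=
    (tendsto_log_div_sub_one.div_const 2).congr fun x ↦ by rw [div_div, mul_comm]
  refine HasDerivAt.lhopital_zero_nhdsNE ?_ ?_ ?_ hnum hden hderiv
  · filter_upwards [nhdsWithin_le_nhds (isOpen_ne.mem_nhds one_ne_zero)] with x hx
    exact hasDerivAt_klFun hx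
  · exact .of_forall fun x ↦ by simpa using ((hasDerivAt_id x).sub_const 1).fun_pow 2
  · filter_upwards [self_mem_nhdsWithin] with x hx
    exact mul_ne_zero two_ne_zero (sub_ne_zero.2 hx)

lemma continuous_klRatio : Continuous klRatio := by
  refine continuous_iff_continuousAt.2 fun x ↦ ?_
  rcases eq_or_ne x 1 with rfl | hx
  · exact continuousAt_update_same.2 tendsto_klFun_div_sq
  · refine (continuousAt_update_of_ne hx).2 (continuous_klFun.continuousAt.div₀ (by fun_prop) ?_)
    exact pow_ne_zero 2 (sub_ne_zero.2 hx)

lemma mul_klFun_div_eq_sq_mul_klRatio {t : ℝ} (ht : 0 < t) (y : ℝ) :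
    t * klFun (y / t) = ((y - t) / √t) ^ 2 * klRatio (1 + (√t)⁻¹ * ((y - t) / √t)) := by
  have hy : 1 + (√t)⁻¹ * ((y - t) / √t) = y / t := by
    field_simp
    rw [Real.sq_sqrt ht.le]
    ring
  rw [hy, ← sq_mul_klRatio, div_pow, Real.sq_sqrt ht.le]
  field_simp

section LRTStatistic

variable {ι : Type*} [Fintype ι]

/-- The log-likelihood ratio statistic for equality of the means of independent Poisson
observations `y i`. The junk values of `Real.log` and of division make it vanish when `y = 0`. -/
noncomputable def lrtStatistic (y : ι → ℝ) : ℝ :=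
  2 * ∑ i, y i * Real.log (Fintype.card ι * y i / ∑ j, y j)

/-- The likelihood ratio statistic of observations of common mean `s⁻²` whose standardized values
are `z`. Unlike `lrtStatistic`, it makes sense at `s = 0`, that is, for an infinite mean. -/
noncomputable def standardizedLRT (s : ℝ) (z : ι → ℝ) : ℝ :=
  2 * (∑ i, z i ^ 2 * klRatio (1 + s * z i) - Fintype.card ι *
    (((∑ i, z i) / Fintype.card ι) ^ 2 * klRatio (1 + s * ((∑ i, z i) / Fintype.card ι))))

lemma continuous_standardizedLRT :
    Continuous fun p : ℝ × (ι → ℝ) ↦ standardizedLRT p.1 p.2 := by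
  have := continuous_klRatio
  unfold standardizedLRT
  fun_prop

lemma standardizedLRT_zero (z : ι → ℝ) :
    standardizedLRT 0 z = ∑ i, z i ^ 2 - Fintype.card ι * ((∑ i, z i) / Fintype.card ι) ^ 2 := by
  simp only [standardizedLRT, zero_mul, add_zero, klRatio_one, ← Finset.sum_mul]
  ring

lemma lrtStatistic_eq_sum_klFun [Nonempty ι] {t : ℝ} (ht : t ≠ 0) {y : ι → ℝ} (hy : 0 ≤ y) :
    lrtStatistic y = 2 * t * (∑ i, klFun (y i / t) -
      Fintype.card ι * klFun ((∑ i, y i) / Fintype.card ι / t)) := by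
  have hlog (i : ι) : y i * Real.log (Fintype.card ι * y i / ∑ j, y j) =
      y i * (Real.log (y i / t) - Real.log ((∑ j, y j) / Fintype.card ι / t)) := by
    rcases eq_or_ne (y i) 0 with hi | hi
    · simp [hi]
    · have hsum : ∑ j, y j ≠ 0 := fun h ↦
        hi ((Finset.sum_eq_zero_iff_of_nonneg fun j _ ↦ hy j).1 h i (Finset.mem_univ i))
      rw [← Real.log_div (by positivity) (by positivity)]
      congr 2
      field_simp
  simp only [lrtStatistic, hlog, mul_sub, klFun_apply, Finset.sum_sub_distrib,
    Finset.sum_add_distrib, ← Finset.sum_mul, ← Finset.sum_div, div_mul_eq_mul_div,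
    Finset.sum_const, Finset.card_univ, nsmul_eq_mul]
  field_simp
  ring

lemma lrtStatistic_eq_standardizedLRT [Nonempty ι] {t : ℝ} (ht : 0 < t) {y : ι → ℝ}
    (hy : 0 ≤ y) :
    lrtStatistic y = standardizedLRT (√t)⁻¹ fun i ↦ (y i - t) / √t := by
  have hmean : (∑ i, (y i - t) / √t) / Fintype.card ι =
      ((∑ i, y i) / Fintype.card ι - t) / √t := by
    rw [← Finset.sum_div, Finset.sum_sub_distrib, Finset.sum_const, Finset.card_univ,
      nsmul_eq_mul]
    field_simp
  rw [lrtStatistic_eq_sum_klFun ht.ne' hy, standardizedLRT, hmean]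
  simp only [← mul_klFun_div_eq_sq_mul_klRatio ht, ← Finset.mul_sum]
  ring

lemma measurable_lrtStatistic : Measurable (lrtStatistic : (ι → ℝ) → ℝ) := by
  unfold lrtStatistic
  fun_prop

end LRTStatistic

section ConvergenceInDistribution

variable {κ : Type*} {l : Filter κ}

lemma dirac_prod_map {Ω E F : Type*} [MeasurableSpace Ω] [MeasurableSpace E] [MeasurableSpace F]
    {μ : Measure Ω} [SFinite μ] {X : Ω → E} (a : F) (hX : AEMeasurable X μ) :
    (Measure.dirac a).prod (μ.map X) = μ.map fun ω ↦ (a, X ω) := by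
  rw [Measure.dirac_prod, AEMeasurable.map_map_of_aemeasurable (by fun_prop) hX]
  rfl

lemma tendstoInDistribution_const_prodMk {E F Ω' : Type*} {Ω : κ → Type*}
    [∀ k, MeasurableSpace (Ω k)] {μ : ∀ k, Measure (Ω k)} [∀ k, IsProbabilityMeasure (μ k)]
    [MeasurableSpace Ω'] {μ' : Measure Ω'} [IsProbabilityMeasure μ']
    [TopologicalSpace E] [SecondCountableTopology E] [TopologicalSpace.PseudoMetrizableSpace E]
    [MeasurableSpace E] [OpensMeasurableSpace E]
    [TopologicalSpace F] [SecondCountableTopology F] [TopologicalSpace.PseudoMetrizableSpace F]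
    [MeasurableSpace F] [OpensMeasurableSpace F]
    {c : κ → F} {a : F} {X : ∀ k, Ω k → E} {Z : Ω' → E} (hc : Tendsto c l (𝓝 a))
    (hX : TendstoInDistribution X l Z μ μ') :
    TendstoInDistribution (fun k ω ↦ (c k, X k ω)) l (fun ω ↦ (a, Z ω)) μ μ' where
  forall_aemeasurable k := aemeasurable_const.prodMk (hX.forall_aemeasurable k)
  aemeasurable_limit := aemeasurable_const.prodMk hX.aemeasurable_limit
  tendsto := by
    have hlim := (ProbabilityMeasure.continuous_prod.tendsto _).comp
      (((continuous_diracProba.tendsto a).comp hc).prodMk_nhds hX.tendsto)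
    refine (hlim.congr fun k ↦ Subtype.ext ?_).mono_right (congrArg 𝓝 ?_).le
    · exact dirac_prod_map (c k) (hX.forall_aemeasurable k)
    · exact Subtype.ext (dirac_prod_map a hX.aemeasurable_limit)

lemma tendstoInDistribution_pi {ι : Type*} [Fintype ι] {E Ω' : ι → Type*} {Ω : κ → ι → Type*}
    [∀ k i, MeasurableSpace (Ω k i)] {μ : ∀ k i, Measure (Ω k i)}
    [∀ k i, IsProbabilityMeasure (μ k i)]
    [∀ i, MeasurableSpace (Ω' i)] {μ' : ∀ i, Measure (Ω' i)} [∀ i, IsProbabilityMeasure (μ' i)]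
    [∀ i, TopologicalSpace (E i)] [∀ i, SecondCountableTopology (E i)]
    [∀ i, TopologicalSpace.PseudoMetrizableSpace (E i)]
    [∀ i, MeasurableSpace (E i)] [∀ i, OpensMeasurableSpace (E i)]
    {X : ∀ k i, Ω k i → E i} {Z : ∀ i, Ω' i → E i}
    (hX : ∀ i, TendstoInDistribution (fun k ↦ X k i) l (Z i) (fun k ↦ μ k i) (μ' i)) :
    TendstoInDistribution (fun k ω i ↦ X k i (ω i)) l (fun ω i ↦ Z i (ω i))
      (fun k ↦ Measure.pi (μ k)) (Measure.pi μ') where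
  forall_aemeasurable k := aemeasurable_pi_lambda _ fun i ↦
    ((hX i).forall_aemeasurable k).comp_quasiMeasurePreserving
      (Measure.quasiMeasurePreserving_eval _ i)
  aemeasurable_limit := aemeasurable_pi_lambda _ fun i ↦
    (hX i).aemeasurable_limit.comp_quasiMeasurePreserving
      (Measure.quasiMeasurePreserving_eval _ i)
  tendsto := by
    have : ∀ k i, IsProbabilityMeasure ((μ k i).map (X k i)) := fun k i ↦
      Measure.isProbabilityMeasure_map ((hX i).forall_aemeasurable k)
    have : ∀ i, IsProbabilityMeasure ((μ' i).map (Z i)) := fun i ↦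
      Measure.isProbabilityMeasure_map (hX i).aemeasurable_limit
    have hlim := (ProbabilityMeasure.continuous_pi.tendsto _).comp
      (tendsto_pi_nhds.2 fun i ↦ (hX i).tendsto)
    refine (hlim.congr fun k ↦ Subtype.ext ?_).mono_right (congrArg 𝓝 ?_).le
    · exact (Measure.pi_map_pi fun i ↦ (hX i).forall_aemeasurable k).symm
    · exact Subtype.ext (Measure.pi_map_pi fun i ↦ (hX i).aemeasurable_limit).symm

lemma tendstoInDistribution_lrtStatistic {ι Ω' : Type*} [Fintype ι] [Nonempty ι] {Ω : κ → Type*}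
    [∀ k, MeasurableSpace (Ω k)] {μ : ∀ k, Measure (Ω k)} [∀ k, IsProbabilityMeasure (μ k)]
    [MeasurableSpace Ω'] {μ' : Measure Ω'} [IsProbabilityMeasure μ']
    {τ : κ → ℝ} {Y : ∀ k, Ω k → ι → ℝ} {Z : Ω' → ι → ℝ} (hτ : Tendsto τ l atTop)
    (hY : ∀ k, AEMeasurable (Y k) (μ k)) (hY_nonneg : ∀ k ω, 0 ≤ Y k ω)
    (hYZ : TendstoInDistribution (fun k ω i ↦ (Y k ω i - τ k) / √(τ k)) l Z μ μ') :
    TendstoInDistribution (fun k ω ↦ lrtStatistic (Y k ω)) l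
      (fun ω ↦ ∑ i, Z ω i ^ 2 - Fintype.card ι * ((∑ i, Z ω i) / Fintype.card ι) ^ 2) μ μ' := by
  have hτ_inv : Tendsto (fun k ↦ (√(τ k))⁻¹) l (𝓝 0) :=
    (Real.tendsto_sqrt_atTop.comp hτ).inv_tendsto_atTop
  have hlim := (tendstoInDistribution_const_prodMk hτ_inv hYZ).continuous_comp
    continuous_standardizedLRT
  simp only [Function.comp_def, standardizedLRT_zero] at hlim
  refine ⟨fun k ↦ measurable_lrtStatistic.comp_aemeasurable (hY k), hlim.aemeasurable_limit,
    hlim.tendsto.congr' ?_⟩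
  filter_upwards [hτ.eventually_gt_atTop 0] with k hk
  exact Subtype.ext (congrArg (Measure.map · (μ k)) (funext fun ω ↦
    (lrtStatistic_eq_standardizedLRT hk (hY_nonneg k ω)).symm))

end ConvergenceInDistribution

section PoissonCLT

lemma charFun_map_sub_div_poissonMeasure (r : ℝ≥0) (c x : ℝ) :
    charFun ((poissonMeasure r).map fun k : ℕ ↦ ((k : ℝ) - r) / c) x =
      Complex.exp (r * (Complex.exp ((x / c : ℝ) * I) - 1 - (x / c : ℝ) * I)) := by
  have hmap : (poissonMeasure r).map (fun k : ℕ ↦ ((k : ℝ) - r) / c) =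
      (((poissonMeasure r).map fun k : ℕ ↦ (k : ℝ)).map (c⁻¹ * ·)).map (· + -(r / c : ℝ)) := by
    rw [Measure.map_map (by fun_prop) (by fun_prop), Measure.map_map (by fun_prop) .of_discrete]
    congr 1
    ext k
    simp only [Function.comp_apply]
    ring
  rw [hmap, charFun_map_add_const, charFun_map_mul,
    charFun_map_cast_poissonMeasure, ← Complex.exp_add]
  congr 1
  simp only [div_eq_inv_mul, Real.inner_apply]
  push_cast
  ring

lemma tendsto_mul_exp_sub_one_sub {κ : Type*} {l : Filter κ} {τ : κ → ℝ}
    (hτ : Tendsto τ l atTop) (x : ℝ) :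
    Tendsto (fun k ↦ τ k * (Complex.exp ((x / √(τ k) : ℝ) * I) - 1 - (x / √(τ k) : ℝ) * I)) l
      (𝓝 (-(x ^ 2) / 2)) := by
  set w : κ → ℂ := fun k ↦ (x / √(τ k) : ℝ) * I with hw
  have hw_zero : Tendsto w l (𝓝 0) := by
    have : Tendsto (fun k ↦ x / √(τ k)) l (𝓝 0) :=
      (Real.tendsto_sqrt_atTop.comp hτ).const_div_atTop x
    simpa [hw] using (Complex.continuous_ofReal.tendsto' 0 0 rfl |>.comp this).mul_const I
  have hw_sq : (fun k ↦ τ k * w k ^ 2) =ᶠ[l] fun _ ↦ (-x ^ 2 : ℂ) := by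
    filter_upwards [hτ.eventually_gt_atTop 0] with k hk
    have : (τ k : ℂ) ≠ 0 := mod_cast hk.ne'
    simp only [hw, mul_pow, Complex.I_sq]
    rw [← Complex.ofReal_pow, div_pow, Real.sq_sqrt hk.le]
    push_cast
    field_simp
  have hrem : Tendsto (fun k ↦ (τ k * (Complex.exp (w k) - 1 - w k - w k ^ 2 / 2))) l (𝓝 0) := by
    have hexp := (Complex.exp_sub_sum_range_succ_isLittleO_pow 2).comp_tendsto hw_zero
    have hmul := (Asymptotics.isBigO_refl (fun k ↦ (τ k : ℂ)) l).mul_isLittleO hexp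
    have hone := hmul.trans_isBigO
      (hw_sq.trans_isBigO (Asymptotics.isBigO_const_const _ (one_ne_zero (α := ℂ)) l))
    refine ((Asymptotics.isLittleO_one_iff ℂ).1 hone).congr fun k ↦ ?_
    congr 1
    simp only [Function.comp_apply, Finset.sum_range_succ, Finset.sum_range_zero, pow_zero, pow_one,
      Nat.factorial_zero, Nat.factorial_one, Nat.factorial_two, Nat.cast_one, Nat.cast_ofNat]
    ring
  rw [← zero_add (-(x ^ 2 : ℂ) / 2)]
  refine (hrem.add_const _).congr' ?_
  filter_upwards [hw_sq] with k hk
  linear_combination -hk / 2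

lemma tendstoInDistribution_poissonMeasure :
    TendstoInDistribution (fun (t : ℝ≥0) (k : ℕ) ↦ ((k : ℝ) - t) / √t) atTop id
      (fun t ↦ poissonMeasure t) (gaussianReal 0 1) where
  forall_aemeasurable t := .of_discrete
  tendsto := by
    refine tendsto_of_seq_tendsto fun u hu ↦
      ProbabilityMeasure.tendsto_of_tendsto_charFun fun x ↦ ?_
    have hexp := tendsto_mul_exp_sub_one_sub (NNReal.tendsto_coe_atTop.2 hu) x
    have hchar : Tendsto
        (fun n ↦ charFun ((poissonMeasure (u n)).map fun k : ℕ ↦ ((k : ℝ) - u n) / √(u n)) x)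
        atTop (𝓝 (charFun ((gaussianReal 0 1).map id) x)) := by
      simpa [charFun_map_sub_div_poissonMeasure, charFun_gaussianReal, neg_div] using hexp.cexp
    exact hchar

end PoissonCLT

section ChiSquared

lemma eq_of_mgf_id_eq {μ ν : Measure ℝ} [IsProbabilityMeasure μ] [IsFiniteMeasure ν]
    (h : mgf id μ = mgf id ν) (h_zero : 0 ∈ interior (integrableExpSet id μ)) : μ = ν := by
  refine Measure.ext_of_charFun (funext fun t ↦ ?_)
  rw [← complexMGF_id_mul_I, ← complexMGF_id_mul_I]
  exact eqOn_complexMGF_of_mgf h (by simpa using h_zero)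

lemma mgf_id_gammaMeasure_eq_setIntegral {a r : ℝ} (ha : 0 < a) (hr : 0 < r) (t : ℝ) :
    mgf id (gammaMeasure a r) t =
      r ^ a / Real.Gamma a * ∫ x in Set.Ioi 0, x ^ (a - 1) * Real.exp (-((r - t) * x)) := by
  have hpdf (x : ℝ) : gammaPDFReal a r x * Real.exp (t * x) = (Set.Ici 0).indicator (fun x ↦
      r ^ a / Real.Gamma a * (x ^ (a - 1) * Real.exp (-((r - t) * x)))) x := by
    simp only [gammaPDFReal, Set.indicator, Set.mem_Ici, ite_mul, zero_mul]
    refine if_congr Iff.rfl ?_ rfl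
    rw [mul_assoc, mul_assoc, ← Real.exp_add]
    ring_nf
  have hdensity : gammaPDF a r = fun x ↦ ENNReal.ofReal (gammaPDFReal a r x) := rfl
  rw [mgf, gammaMeasure, hdensity, integral_withDensity_eq_integral_toReal_smul
    (measurable_gammaPDFReal a r).ennreal_ofReal (by simp)]
  simp only [ENNReal.toReal_ofReal (gammaPDFReal_nonneg ha hr _), smul_eq_mul, id_eq, hpdf]
  rw [integral_indicator measurableSet_Ici, integral_Ici_eq_integral_Ioi, integral_const_mul]

lemma mgf_id_gammaMeasure_of_lt {a r t : ℝ} (ha : 0 < a) (hr : 0 < r) (ht : t < r) :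
    mgf id (gammaMeasure a r) t = (r / (r - t)) ^ a := by
  have hrt : 0 < r - t := sub_pos.2 ht
  rw [mgf_id_gammaMeasure_eq_setIntegral ha hr, Real.integral_rpow_mul_exp_neg_mul_Ioi ha hrt,
    div_eq_mul_one_div r, Real.mul_rpow hr.le (by positivity)]
  field_simp [(Real.Gamma_pos_of_pos ha).ne']

lemma mgf_id_gammaMeasure_of_le {a r t : ℝ} (ha : 0 < a) (hr : 0 < r) (ht : r ≤ t) :
    mgf id (gammaMeasure a r) t = 0 := by
  rw [mgf_id_gammaMeasure_eq_setIntegral ha hr, integral_undef, mul_zero]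
  refine fun hint ↦ not_integrableOn_Ioi_rpow (a - 1) (hint.mono' ?_ ?_)
  · exact (measurable_id.pow_const _).aestronglyMeasurable
  · filter_upwards [ae_restrict_mem measurableSet_Ioi] with x (hx : 0 < x)
    rw [Real.norm_of_nonneg (by positivity)]
    exact le_mul_of_one_le_right (by positivity)
      (Real.one_le_exp (neg_nonneg.2 (mul_nonpos_of_nonpos_of_nonneg (sub_nonpos.2 ht) hx.le)))

lemma zero_mem_interior_integrableExpSet_gammaMeasure {a r : ℝ} (ha : 0 < a) (hr : 0 < r) :
    0 ∈ interior (integrableExpSet id (gammaMeasure a r)) := by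
  have := isProbabilityMeasure_gammaMeasure ha hr
  refine mem_interior.2 ⟨Set.Iio r, fun t (ht : t < r) ↦ ?_, isOpen_Iio, hr⟩
  refine mgf_pos_iff.1 ?_
  rw [mgf_id_gammaMeasure_of_lt ha hr ht]
  exact Real.rpow_pos_of_pos (div_pos hr (sub_pos.2 ht)) a

-- For `t ≥ 1 / 2` both sides are junk zeros, as `Real.exp (t * x ^ 2)` is not integrable.
lemma mgf_sq_gaussianReal (t : ℝ) : mgf (· ^ 2) (gaussianReal 0 1) t = (√(1 - 2 * t))⁻¹ := by
  have hpdf (x : ℝ) : gaussianPDFReal 0 1 x • Real.exp (t * x ^ 2) =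
      (√(2 * Real.pi))⁻¹ * Real.exp (-(1 / 2 - t) * x ^ 2) := by
    rw [gaussianPDFReal, NNReal.coe_one, mul_one, smul_eq_mul, mul_assoc, ← Real.exp_add]
    ring_nf
  simp only [mgf, integral_gaussianReal_eq_integral_smul one_ne_zero, hpdf]
  rw [integral_const_mul, integral_gaussian, ← Real.sqrt_inv, ← Real.sqrt_inv,
    ← Real.sqrt_mul (by positivity)]
  congr 1
  field_simp

variable {E : Type*} [NormedAddCommGroup E] [InnerProductSpace ℝ E]

lemma norm_sq_orthogonalProjectionOnto_orthogonal_span_singleton (v x : E) :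
    ‖(ℝ ∙ v)ᗮ.orthogonalProjectionOnto x‖ ^ 2 = ‖x‖ ^ 2 - ⟪v, x⟫ ^ 2 / ‖v‖ ^ 2 := by
  have hproj : ‖(ℝ ∙ v).orthogonalProjectionOnto x‖ ^ 2 = ⟪v, x⟫ ^ 2 / ‖v‖ ^ 2 := by
    rw [Submodule.coe_norm, ← Submodule.starProjection_apply, Submodule.starProjection_singleton,
      norm_smul, mul_pow, Real.norm_eq_abs, sq_abs]
    rcases eq_or_ne v 0 with rfl | hv
    · simp
    · simp only [RCLike.ofReal_real_eq_id, id_eq]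
      field_simp
  rw [Submodule.norm_sq_eq_add_norm_sq_projection x (ℝ ∙ v), hproj, add_sub_cancel_left]

variable [FiniteDimensional ℝ E] [MeasurableSpace E] [BorelSpace E]

lemma mgf_norm_sq_stdGaussian (t : ℝ) :
    mgf (‖·‖ ^ 2) (stdGaussian E) t = (√(1 - 2 * t))⁻¹ ^ finrank ℝ E := by
  have hnorm (x : Fin (finrank ℝ E) → ℝ) :
      ‖∑ i, x i • stdOrthonormalBasis ℝ E i‖ ^ 2 = ∑ i, x i ^ 2 := by
    rw [← real_inner_self_eq_norm_sq, (stdOrthonormalBasis ℝ E).orthonormal.inner_sum]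
    simp only [conj_trivial, sq]
  rw [mgf, stdGaussian, integral_map (Measurable.aemeasurable (by fun_prop)) (by fun_prop)]
  simp only [hnorm, Finset.mul_sum, Real.exp_sum]
  rw [integral_fintype_prod_eq_pow fun x ↦ Real.exp (t * x ^ 2), Fintype.card_fin]
  exact congrArg (· ^ _) (mgf_sq_gaussianReal t)

lemma map_norm_sq_stdGaussian [Nontrivial E] :
    (stdGaussian E).map (‖·‖ ^ 2) = gammaMeasure (finrank ℝ E / 2) (1 / 2) := by
  have hdim : (0 : ℝ) < finrank ℝ E / 2 := by positivity [finrank_pos (R := ℝ) (M := E)]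
  have := isProbabilityMeasure_gammaMeasure hdim (one_half_pos (α := ℝ))
  have := Measure.isProbabilityMeasure_map (μ := stdGaussian E) (f := (‖·‖ ^ 2)) (by fun_prop)
  refine (eq_of_mgf_id_eq (funext fun t ↦ ?_)
    (zero_mem_interior_integrableExpSet_gammaMeasure hdim one_half_pos)).symm
  rw [mgf_id_map (by fun_prop), mgf_norm_sq_stdGaussian]
  rcases lt_or_ge t (1 / 2) with ht | ht
  · rw [mgf_id_gammaMeasure_of_lt hdim one_half_pos ht]
    have hpos : 0 < 1 - 2 * t := by linarith
    rw [show 1 / 2 / (1 / 2 - t) = (1 - 2 * t)⁻¹ by field_simp,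
      Real.rpow_div_two_eq_sqrt _ (inv_nonneg.2 hpos.le), Real.sqrt_inv, Real.rpow_natCast]
  · rw [mgf_id_gammaMeasure_of_le hdim one_half_pos ht, Real.sqrt_eq_zero_of_nonpos (by linarith),
      inv_zero, zero_pow finrank_pos.ne']

lemma map_orthogonalProjectionOnto_stdGaussian (K : Submodule ℝ E) :
    (stdGaussian E).map K.orthogonalProjectionOnto = stdGaussian K := by
  refine Measure.ext_of_charFun (funext fun t ↦ ?_)
  rw [charFun_apply, integral_map (by fun_prop) (by fun_prop)]
  simp only [Submodule.inner_orthogonalProjectionOnto_eq_of_mem_right]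
  rw [← charFun_apply, charFun_stdGaussian, charFun_stdGaussian, Submodule.coe_norm]

lemma map_norm_sq_sub_inner_sq_stdGaussian (hE : 1 < finrank ℝ E) {v : E} (hv : v ≠ 0) :
    (stdGaussian E).map (fun x ↦ ‖x‖ ^ 2 - ⟪v, x⟫ ^ 2 / ‖v‖ ^ 2) =
      gammaMeasure ((finrank ℝ E - 1) / 2) (1 / 2) := by
  have hdim : finrank ℝ (ℝ ∙ v)ᗮ + 1 = finrank ℝ E := by
    rw [← finrank_span_singleton (K := ℝ) hv, add_comm, Submodule.finrank_add_finrank_orthogonal]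
  have : Nontrivial (ℝ ∙ v)ᗮ := nontrivial_of_finrank_pos (R := ℝ) (by lia)
  have hlaw := map_norm_sq_stdGaussian (E := (ℝ ∙ v)ᗮ)
  rw [← map_orthogonalProjectionOnto_stdGaussian, Measure.map_map (by fun_prop) (by fun_prop)]
    at hlaw
  simp only [← norm_sq_orthogonalProjectionOnto_orthogonal_span_singleton]
  rw [← hdim, Nat.cast_add_one, add_sub_cancel_right]
  exact hlaw

lemma map_sum_sq_sub_mean_sq_pi_gaussianReal {ι : Type*} [Fintype ι] [Nontrivial ι] :
    (Measure.pi fun _ : ι ↦ gaussianReal 0 1).map (fun z : ι → ℝ ↦ ∑ i, z i ^ 2 -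
      Fintype.card ι * ((∑ i, z i) / Fintype.card ι) ^ 2) =
      gammaMeasure ((Fintype.card ι - 1) / 2) (1 / 2) := by
  let v : EuclideanSpace ℝ ι := WithLp.toLp 2 1
  have hv : v ≠ 0 := fun h ↦ one_ne_zero ((WithLp.toLp_eq_zero 2).1 h)
  have hlaw := map_norm_sq_sub_inner_sq_stdGaussian
    (finrank_euclideanSpace (𝕜 := ℝ) (ι := ι) ▸ Fintype.one_lt_card) hv
  rw [← map_pi_eq_stdGaussian, Measure.map_map (by fun_prop) (by fun_prop),
    finrank_euclideanSpace] at hlaw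
  convert hlaw using 3 with z
  simp only [v, Function.comp_apply, EuclideanSpace.real_norm_sq_eq, PiLp.inner_apply,
    RCLike.inner_apply, Pi.one_apply, conj_trivial, mul_one, one_pow, Finset.sum_const,
    Finset.card_univ, nsmul_eq_mul]
  field_simp

end ChiSquared

/-- Asymptotic null distribution of the likelihood ratio statistic for equal means of
`P` Poisson distributions: if `Y₁(t), …, Y_P(t)` are independent `Poisson(t)` variables
and `R(t) = 2 ∑ᵢ Yᵢ(t) log(P·Yᵢ(t)/∑ⱼ Yⱼ(t))` (with `R(t) = 0` on `∑ⱼ Yⱼ(t) = 0` and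
`0·log 0 = 0`), then as `t → ∞` the law of `R(t)` converges weakly to the chi-squared
distribution with `P − 1` degrees of freedom, i.e. the gamma distribution with shape
`(P−1)/2` and rate `1/2`. Weak convergence is expressed via integrals of bounded
continuous test functions. -/
theorem lrt_statistic_tendsto_chiSq
    (P : ℕ) (hP : 2 ≤ P)
    (ρ : (Fin P → ℕ) → ℝ)
    (hρ : ∀ y : Fin P → ℕ, ρ y =
      if (∑ j, y j) = 0 then 0
      else 2 * ∑ i, (y i : ℝ) * Real.log ((P : ℝ) * (y i : ℝ) / ∑ j, ((y j : ℕ) : ℝ)))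
    (law : NNReal → Measure ℝ)
    (hlaw : ∀ t : NNReal, law t =
      Measure.map ρ (Measure.pi fun _ : Fin P => poissonMeasure t))
    (chiSq : Measure ℝ)
    (hchi : chiSq = gammaMeasure (((P : ℝ) - 1) / 2) (1 / 2)) :
    ∀ f : BoundedContinuousFunction ℝ ℝ,
      Tendsto (fun t : NNReal => ∫ x, f x ∂(law t)) atTop (nhds (∫ x, f x ∂chiSq)) := by
  intro f
  have : Nontrivial (Fin P) := Fin.nontrivial_iff_two_le.2 hP
  have hρ_eq : ρ = fun y ↦ lrtStatistic fun i ↦ (y i : ℝ) := by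
    funext y
    rw [hρ, lrtStatistic, Fintype.card_fin]
    split_ifs with hy
    · simp [Finset.sum_eq_zero_iff.1 hy]
    · rfl
  have hclt := tendstoInDistribution_pi fun _ : Fin P ↦ tendstoInDistribution_poissonMeasure
  have hlrt := tendstoInDistribution_lrtStatistic (Y := fun _ (y : Fin P → ℕ) i ↦ (y i : ℝ))
    (NNReal.tendsto_coe_atTop.2 tendsto_id) (fun _ ↦ .of_discrete) (fun _ y i ↦ (y i).cast_nonneg)
    hclt
  have hlim := ProbabilityMeasure.tendsto_iff_forall_integral_tendsto.1 hlrt.tendsto f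
  simp only [id_eq, ProbabilityMeasure.coe_mk, map_sum_sq_sub_mean_sq_pi_gaussianReal] at hlim
  simpa only [hρ_eq, hlaw, hchi, Fintype.card_fin] using hlim
end

section
/- Let c > 0 and P ≥ 1 be given and let f^P(x₁,…,x_P) = ∑_{i=1}^P x_i log(x_i/c), with the convention 0·log 0 = 0. Consider the constraint set Ω_{c,P} = { x ∈ [0, Pc]^P : (1/P)∑_{i=1}^P x_i = c }. Then for every x ∈ Ω_{c,P} one has f^P(x) ≤ Pc·log P, and this maximum is attained exactly by the elements of Ω_{c,P} of the form (0, …, 0, Pc, 0, …, 0) (the vectors with one coordinate equal to Pc and all others zero). -/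
open Set

/-!
Write `S = ∑ i, x i`. Each `x i` lies in `[0, S]`, so `x i * log (x i / c) ≤ x i * log (S / c)`,
with equality only if `x i = 0` or `x i = S`; summing over `i` gives the bound. In the case of
equality, an index with `x i = S` leaves nothing for the other coordinates.
-/

section OrderedAddCommMonoid

variable {ι M : Type*} [AddCommMonoid M] [PartialOrder M] [IsOrderedCancelAddMonoid M]
  {s : Finset ι} {x : ι → M}

lemma apply_eq_sum_iff {i : ι} (hx : ∀ j ∈ s, 0 ≤ x j) (hi : i ∈ s) :
    x i = ∑ j ∈ s, x j ↔ ∀ j ∈ s, j ≠ i → x j = 0 := by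
  classical
  rw [← Finset.add_sum_erase s x hi, left_eq_add, Finset.sum_eq_zero_iff_of_nonneg
    fun j hj => hx j (Finset.mem_of_mem_erase hj)]
  simp only [Finset.mem_erase, and_imp]
  exact forall_congr' fun _ => forall_comm

lemma forall_eq_zero_or_eq_sum_iff (hs : s.Nonempty) (hx : ∀ i ∈ s, 0 ≤ x i) :
    (∀ i ∈ s, x i = 0 ∨ x i = ∑ j ∈ s, x j) ↔ ∃ i ∈ s, x i = ∑ j ∈ s, x j := by
  constructor
  · intro h
    by_cases hzero : ∀ i ∈ s, x i = 0
    · obtain ⟨i, hi⟩ := hs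
      exact ⟨i, hi, by rw [hzero i hi, Finset.sum_eq_zero hzero]⟩
    · push Not at hzero
      obtain ⟨i, hi, hne⟩ := hzero
      exact ⟨i, hi, (h i hi).resolve_left hne⟩
  · rintro ⟨i, hi, hsum⟩ j hj
    rcases eq_or_ne j i with rfl | hji
    · exact Or.inr hsum
    · exact Or.inl ((apply_eq_sum_iff hx hi).1 hsum j hj hji)

end OrderedAddCommMonoid

section OrderedSemiring

variable {ι R : Type*} [Semiring R] [PartialOrder R] {g : R → R} {a b : R} {s : Finset ι}
  {x : ι → R}

lemma mul_apply_le_mul_apply [IsOrderedRing R] (hg : MonotoneOn g (Ioi 0)) (ha : 0 ≤ a)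
    (hab : a ≤ b) : a * g a ≤ a * g b := by
  rcases ha.eq_or_lt with rfl | hpos
  · simp only [zero_mul, le_refl]
  · exact mul_le_mul_of_nonneg_left (hg hpos (hpos.trans_le hab) hab) ha

lemma mul_apply_eq_mul_apply_iff [IsStrictOrderedRing R] (hg : StrictMonoOn g (Ioi 0))
    (ha : 0 ≤ a) (hab : a ≤ b) : a * g a = a * g b ↔ a = 0 ∨ a = b := by
  constructor
  · intro heq
    by_contra! ⟨hne_zero, hne⟩
    have hpos : 0 < a := ha.lt_of_ne' hne_zero
    have hlt : g a < g b := hg hpos (hpos.trans_le hab) (hab.lt_of_ne hne)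
    exact (mul_lt_mul_of_pos_left hlt hpos).ne heq
  · rintro (rfl | rfl)
    · simp only [zero_mul]
    · rfl

lemma sum_mul_apply_le_sum_mul_apply_sum [IsOrderedRing R] (hg : MonotoneOn g (Ioi 0))
    (hx : ∀ i ∈ s, 0 ≤ x i) :
    ∑ i ∈ s, x i * g (x i) ≤ (∑ i ∈ s, x i) * g (∑ i ∈ s, x i) := by
  rw [Finset.sum_mul]
  exact Finset.sum_le_sum fun i hi =>
    mul_apply_le_mul_apply hg (hx i hi) (Finset.single_le_sum hx hi)

lemma sum_mul_apply_eq_sum_mul_apply_sum_iff [IsStrictOrderedRing R]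
    (hg : StrictMonoOn g (Ioi 0)) (hs : s.Nonempty) (hx : ∀ i ∈ s, 0 ≤ x i) :
    ∑ i ∈ s, x i * g (x i) = (∑ i ∈ s, x i) * g (∑ i ∈ s, x i) ↔
      ∃ i ∈ s, x i = ∑ j ∈ s, x j := by
  have hle : ∀ i ∈ s, x i ≤ ∑ j ∈ s, x j := fun _ => Finset.single_le_sum hx
  rw [Finset.sum_mul, Finset.sum_eq_sum_iff_of_le fun i hi =>
    mul_apply_le_mul_apply hg.monotoneOn (hx i hi) (hle i hi),
    ← forall_eq_zero_or_eq_sum_iff hs hx]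
  exact forall₂_congr fun i hi => mul_apply_eq_mul_apply_iff hg (hx i hi) (hle i hi)

end OrderedSemiring

lemma strictMonoOn_log_div_const {c : ℝ} (hc : 0 < c) :
    StrictMonoOn (fun t => Real.log (t / c)) (Ioi 0) := fun _ ht _ _ htu =>
  Real.log_lt_log (div_pos ht hc) (div_lt_div_of_pos_right htu hc)

theorem max_of_lrt_entropy_sum_general {ι : Type*} [Fintype ι] [Nonempty ι] {c S : ℝ} (hc : 0 < c)
    {x : ι → ℝ} (hx : ∀ i, 0 ≤ x i) (hS : ∑ i, x i = S) :
    ∑ i, x i * Real.log (x i / c) ≤ S * Real.log (S / c) ∧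
      (∑ i, x i * Real.log (x i / c) = S * Real.log (S / c) ↔
        ∃ i, x i = S ∧ ∀ j, j ≠ i → x j = 0) := by
  subst hS
  have hlog := strictMonoOn_log_div_const hc
  have hx' : ∀ i ∈ Finset.univ, 0 ≤ x i := fun i _ => hx i
  refine ⟨sum_mul_apply_le_sum_mul_apply_sum hlog.monotoneOn hx',
    (sum_mul_apply_eq_sum_mul_apply_sum_iff hlog Finset.univ_nonempty hx').trans ?_⟩
  have hothers (i : ι) : x i = ∑ j, x j → ∀ j, j ≠ i → x j = 0 := fun hi j =>
    (apply_eq_sum_iff hx' (Finset.mem_univ i)).1 hi j (Finset.mem_univ j)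
  simp only [Finset.mem_univ, true_and, and_iff_left_of_imp (hothers _)]

/-- Maximizers of `f^P(x) = ∑ᵢ xᵢ log(xᵢ/c)` over the constraint set
`Ω_{c,P} = {x ∈ [0, Pc]^P : (1/P)∑ᵢ xᵢ = c}`: the maximum value is `Pc·log P`, attained
exactly at the vectors with one coordinate equal to `Pc` and all others zero (the
convention `0·log 0 = 0` holds automatically since `Real.log 0 = 0`). -/
theorem max_of_lrt_entropy_sum
    (c : ℝ) (hc : 0 < c) (P : ℕ) (hP : 1 ≤ P)
    (f : (Fin P → ℝ) → ℝ)
    (hf : ∀ x : Fin P → ℝ, f x = ∑ i, x i * Real.log (x i / c))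
    (Ω : Set (Fin P → ℝ))
    (hΩ : Ω = {x : Fin P → ℝ |
      (∀ i, x i ∈ Set.Icc (0 : ℝ) ((P : ℝ) * c)) ∧ (∑ i, x i) / (P : ℝ) = c}) :
    (∀ x ∈ Ω, f x ≤ (P : ℝ) * c * Real.log P) ∧
      (∀ x ∈ Ω, (f x = (P : ℝ) * c * Real.log P ↔
        ∃ i, x i = (P : ℝ) * c ∧ ∀ j, j ≠ i → x j = 0)) := by
  have : Nonempty (Fin P) := ⟨⟨0, hP⟩⟩
  have hP0 : (P : ℝ) ≠ 0 := Nat.cast_ne_zero.2 (Nat.one_le_iff_ne_zero.1 hP)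
  simp only [hf, hΩ, ← forall₂_and]
  rintro x ⟨hx, hmean⟩
  have hsum : ∑ i, x i = P * c := by rw [(div_eq_iff hP0).1 hmean, mul_comm]
  simpa only [mul_div_cancel_right₀ _ hc.ne'] using
    max_of_lrt_entropy_sum_general hc (fun i => (hx i).1) hsum
end
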